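/- Let m = p_1^{α_1} p_2^{α_2} ⋯ p_k^{α_k} be the prime factorization of an odd number m ≥ 3, where p_1,…,p_k are distinct odd primes. Then the cycle C_m admits edge-magic labelings realizing at least 1 + α_1 + ⋯ + α_k mutually different valences. -/

import Mathlib

/-- An edge-magic labeling of a finite graph presented by an endpoint map
`ends : E → V × V` (loops and multiple edges allowed): the vertex labels `fv`
and edge labels `fe` together form a bijection onto `{1, …, |V| + |E|}` and
every edge `e` satisfies `fv (ends e).1 + fe e + fv (ends e).2 = k`.
The constant `k` is the valence. -/
def IsEdgeMagic {V E : Type} [Fintype V] [Fintype E] (ends : E → V × V)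
    (fv : V → ℕ) (fe : E → ℕ) (k : ℕ) : Prop :=
  Function.Injective (Sum.elim fv fe) ∧
  Set.range (Sum.elim fv fe) = Set.Icc 1 (Fintype.card V + Fintype.card E) ∧
  ∀ e : E, fv (ends e).1 + fe e + fv (ends e).2 = k

/-- A super edge-magic labeling: edge-magic, and moreover the vertex labels
are exactly `{1, …, |V|}`. -/
def IsSuperEdgeMagic {V E : Type} [Fintype V] [Fintype E] (ends : E → V × V)
    (fv : V → ℕ) (fe : E → ℕ) (k : ℕ) : Prop :=
  IsEdgeMagic ends fv fe k ∧ Set.range fv = Set.Icc 1 (Fintype.card V)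

/-- The cycle `C_m`: vertices `Fin m`, edge `i` joins `i` to `i+1 (mod m)`. -/
def cycleEnds (m : ℕ) : Fin m → Fin m × Fin m :=
  fun i => (i, ⟨(i.val + 1) % m, Nat.mod_lt _ i.pos⟩)

/-- The crown `C_m ⊙ K̄_n`: vertices are `Sum.inl i` (cycle vertices `v_i`) and
`Sum.inr (i, j)` (pendant vertices `v_i^j`); edges are the `m` cycle edges and
the `m * n` pendant edges. -/
def crownEnds (m n : ℕ) :
    (Fin m ⊕ Fin m × Fin n) → (Fin m ⊕ Fin m × Fin n) × (Fin m ⊕ Fin m × Fin n)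
  | Sum.inl i => (Sum.inl i, Sum.inl ⟨(i.val + 1) % m, Nat.mod_lt _ i.pos⟩)
  | Sum.inr p => (Sum.inl p.1, Sum.inr p)

/-- The graph `K_{1,n}^l`: the star `K_{1,n}` (center `none`, leaves `some j`)
with a loop (edge `none`) attached at the center. -/
def starLoopEnds (n : ℕ) : Option (Fin n) → Option (Fin n) × Option (Fin n)
  | none => (none, none)
  | some j => (none, some j)

/-! If `m = n * q` is odd, `C_m` is a twisted product of `C_q` and `C_n`: over each edge of
`C_q` one places a copy of `C_n`, oriented forward over the `(q + 1) / 2` edges with even index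
and backward over the others. The two orientations nearly cancel, so a trip around `C_q`
advances by one step in `C_n` and the product is a single cycle. An edge-magic labeling of `C_q`
and a super edge-magic labeling of `C_n` combine into an edge-magic labeling of `C_m`: the
former chooses a block of `n` consecutive labels, the latter the position within the block.
Starting from the labeling of `C_q` with odd vertex labels and even edge labels, the valence
obtained is `3 * m + 1 - n / 2`, which determines the divisor `n`; and `m` has at least
`1 + Ω(m)` divisors. -/

section EdgeMagic

variable {V E V' E' : Type} [Fintype V] [Fintype E] [Fintype V'] [Fintype E']
  {ends : E → V × V} {fv : V → ℕ} {fe : E → ℕ} {k : ℕ}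

lemma range_eq_Icc_card {α : Type*} [Fintype α] {f : α → ℕ} (hf : Function.Injective f)
    (hmem : ∀ a, f a ∈ Set.Icc 1 (Fintype.card α)) :
    Set.range f = Set.Icc 1 (Fintype.card α) := by
  refine Set.eq_of_subset_of_ncard_le (Set.range_subset_iff.2 hmem) ?_
  rw [← Set.image_univ, Set.ncard_image_of_injective _ hf, Set.ncard_univ,
    Nat.card_eq_fintype_card, ← Finset.coe_Icc, Set.ncard_coe_finset, Nat.card_Icc,
    Nat.add_sub_cancel]

namespace IsEdgeMagic

lemma of_mem_Icc (hfv : Function.Injective fv) (hfe : Function.Injective fe)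
    (hne : ∀ v e, fv v ≠ fe e)
    (hv : ∀ v, fv v ∈ Set.Icc 1 (Fintype.card V + Fintype.card E))
    (he : ∀ e, fe e ∈ Set.Icc 1 (Fintype.card V + Fintype.card E))
    (hk : ∀ e, fv (ends e).1 + fe e + fv (ends e).2 = k) : IsEdgeMagic ends fv fe k := by
  have hinj : Function.Injective (Sum.elim fv fe) := hfv.sumElim hfe hne
  refine ⟨hinj, ?_, hk⟩
  rw [← Fintype.card_sum] at hv he ⊢
  exact range_eq_Icc_card hinj (Sum.rec hv he)

lemma vertex_injective (h : IsEdgeMagic ends fv fe k) : Function.Injective fv :=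
  h.1.comp Sum.inl_injective

lemma edge_injective (h : IsEdgeMagic ends fv fe k) : Function.Injective fe :=
  h.1.comp Sum.inr_injective

lemma vertex_ne_edge (h : IsEdgeMagic ends fv fe k) (v : V) (e : E) : fv v ≠ fe e :=
  fun heq => Sum.inl_ne_inr (h.1 heq)

lemma vertex_mem_Icc (h : IsEdgeMagic ends fv fe k) (v : V) :
    fv v ∈ Set.Icc 1 (Fintype.card V + Fintype.card E) :=
  h.2.1 ▸ Set.mem_range_self (f := Sum.elim fv fe) (Sum.inl v)

lemma edge_mem_Icc (h : IsEdgeMagic ends fv fe k) (e : E) :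
    fe e ∈ Set.Icc 1 (Fintype.card V + Fintype.card E) :=
  h.2.1 ▸ Set.mem_range_self (f := Sum.elim fv fe) (Sum.inr e)

lemma valence_eq (h : IsEdgeMagic ends fv fe k) (e : E) :
    fv (ends e).1 + fe e + fv (ends e).2 = k :=
  h.2.2 e

lemma valence_sub_three (h : IsEdgeMagic ends fv fe k) (e : E) :
    k - 3 = (fv (ends e).1 - 1) + (fe e - 1) + (fv (ends e).2 - 1) := by
  have := (h.vertex_mem_Icc (ends e).1).1
  have := (h.vertex_mem_Icc (ends e).2).1
  have := (h.edge_mem_Icc e).1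
  have := h.valence_eq e
  omega

lemma swap (h : IsEdgeMagic ends fv fe k) : IsEdgeMagic (fun e => (ends e).swap) fv fe k :=
  ⟨h.1, h.2.1, fun e => by rw [← h.valence_eq e]; simp only [Prod.fst_swap, Prod.snd_swap]; ring⟩

lemma comp_equiv (h : IsEdgeMagic ends fv fe k) {ends' : E' → V' × V'} (φ : V' ≃ V) (ψ : E' ≃ E)
    (hends : ∀ e, ends (ψ e) = Prod.map φ φ (ends' e)) :
    IsEdgeMagic ends' (fv ∘ φ) (fe ∘ ψ) k := by
  refine of_mem_Icc (h.vertex_injective.comp φ.injective) (h.edge_injective.comp ψ.injective)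
    (fun v e => h.vertex_ne_edge (φ v) (ψ e)) (fun v => ?_) (fun e => ?_) (fun e => ?_)
  · rw [Fintype.card_congr φ, Fintype.card_congr ψ]
    exact h.vertex_mem_Icc (φ v)
  · rw [Fintype.card_congr φ, Fintype.card_congr ψ]
    exact h.edge_mem_Icc (ψ e)
  · rw [← h.valence_eq (ψ e), hends]
    rfl

end IsEdgeMagic

namespace IsSuperEdgeMagic

lemma of_mem_Icc (hfv : Function.Injective fv) (hfe : Function.Injective fe)
    (hv : ∀ v, fv v ∈ Set.Icc 1 (Fintype.card V))
    (he : ∀ e, fe e ∈ Set.Icc (Fintype.card V + 1) (Fintype.card V + Fintype.card E))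
    (hk : ∀ e, fv (ends e).1 + fe e + fv (ends e).2 = k) : IsSuperEdgeMagic ends fv fe k := by
  refine ⟨.of_mem_Icc hfv hfe (fun v e => ?_) (fun v => ?_) (fun e => ?_) hk,
    range_eq_Icc_card hfv hv⟩
  · exact (Nat.lt_of_le_of_lt (hv v).2 (he e).1).ne
  · exact Set.Icc_subset_Icc_right (Nat.le_add_right _ _) (hv v)
  · exact Set.Icc_subset_Icc_left (Nat.le_add_left _ _) (he e)

lemma vertex_mem_Icc (h : IsSuperEdgeMagic ends fv fe k) (v : V) :
    fv v ∈ Set.Icc 1 (Fintype.card V) :=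
  h.2 ▸ Set.mem_range_self v

lemma edge_mem_Icc (h : IsSuperEdgeMagic ends fv fe k) (e : E) :
    fe e ∈ Set.Icc (Fintype.card V + 1) (Fintype.card V + Fintype.card E) := by
  obtain ⟨hpos, hle⟩ := h.1.edge_mem_Icc e
  refine ⟨?_, hle⟩
  by_contra! hlt
  obtain ⟨v, hv⟩ : fe e ∈ Set.range fv := h.2 ▸ ⟨hpos, Nat.le_of_lt_succ hlt⟩
  exact h.1.vertex_ne_edge v e hv

lemma swap (h : IsSuperEdgeMagic ends fv fe k) :
    IsSuperEdgeMagic (fun e => (ends e).swap) fv fe k :=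
  ⟨h.1.swap, h.2⟩

lemma edge_sub_card_mem_Icc (h : IsSuperEdgeMagic ends fv fe k) (e : E) :
    fe e - Fintype.card V ∈ Set.Icc 1 (Fintype.card E) := by
  obtain ⟨hlt, hle⟩ := h.edge_mem_Icc e
  exact ⟨Nat.le_sub_of_add_le' hlt, Nat.sub_le_iff_le_add'.2 hle⟩

lemma edge_sub_card_injective (h : IsSuperEdgeMagic ends fv fe k) :
    Function.Injective fun e => fe e - Fintype.card V := fun e f hef =>
  h.1.edge_injective <| (tsub_left_inj (Nat.le_of_succ_le (h.edge_mem_Icc e).1)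
    (Nat.le_of_succ_le (h.edge_mem_Icc f).1)).1 hef

lemma valence_sub_card (h : IsSuperEdgeMagic ends fv fe k) (e : E) :
    k - Fintype.card V = fv (ends e).1 + (fe e - Fintype.card V) + fv (ends e).2 := by
  have := (h.edge_mem_Icc e).1
  have := h.1.valence_eq e
  omega

lemma isEdgeMagic_odd_even (h : IsSuperEdgeMagic ends fv fe k)
    (hEV : Fintype.card E ≤ Fintype.card V) (hVE : Fintype.card V ≤ Fintype.card E + 1) :
    IsEdgeMagic ends (fun v => 2 * fv v - 1) (fun e => 2 * (fe e - Fintype.card V))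
      (2 * k - 2 * Fintype.card V - 2) := by
  have hv := fun v => (h.vertex_mem_Icc v).1
  refine .of_mem_Icc (fun v w hvw => h.1.vertex_injective ?_)
    (fun e f hef => h.edge_sub_card_injective (Nat.eq_of_mul_eq_mul_left two_pos hef))
    (fun v e => ?_) (fun v => ?_) (fun e => ?_) (fun e => ?_)
  · have := hv v
    have := hv w
    omega
  · have := hv v
    omega
  · obtain ⟨_, _⟩ := h.vertex_mem_Icc v
    constructor <;> omega
  · obtain ⟨_, _⟩ := h.edge_sub_card_mem_Icc e
    constructor <;> omega
  · have := hv (ends e).1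
    have := hv (ends e).2
    have := (h.edge_mem_Icc e).1
    have := h.1.valence_eq e
    omega

end IsSuperEdgeMagic

/-- The `y`-th label in the `x`-th block of `n` consecutive positive integers. Blocks and positions
are both counted from `1`. -/
def blockLabel (n x y : ℕ) : ℕ := n * (x - 1) + y

lemma blockLabel_le {n x y : ℕ} (hx : 1 ≤ x) (hy : y ≤ n) : blockLabel n x y ≤ n * x :=
  calc n * (x - 1) + y ≤ n * (x - 1) + n := Nat.add_le_add_left hy _
    _ = n * x := by rw [← Nat.mul_succ, Nat.succ_eq_add_one, Nat.sub_add_cancel hx]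

lemma blockLabel_mem_Icc {n N x y : ℕ} (hx : x ∈ Set.Icc 1 N) (hy : y ∈ Set.Icc 1 n) :
    blockLabel n x y ∈ Set.Icc 1 (n * N) :=
  ⟨le_add_left hy.1, (blockLabel_le hx.1 hy.2).trans (Nat.mul_le_mul_left n hx.2)⟩

lemma blockLabel_lt_blockLabel {n x x' y y' : ℕ} (hx : 1 ≤ x) (hxx' : x < x') (hy : y ≤ n)
    (hy' : 1 ≤ y') : blockLabel n x y < blockLabel n x' y' :=
  calc blockLabel n x y ≤ n * x := blockLabel_le hx hy
    _ ≤ n * (x' - 1) := Nat.mul_le_mul_left n (Nat.le_sub_one_of_lt hxx')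
    _ < blockLabel n x' y' := Nat.lt_add_of_pos_right hy'

lemma blockLabel_inj {n x x' y y' : ℕ} (hx : 1 ≤ x) (hx' : 1 ≤ x') (hy : y ∈ Set.Icc 1 n)
    (hy' : y' ∈ Set.Icc 1 n) : blockLabel n x y = blockLabel n x' y' ↔ x = x' ∧ y = y' := by
  refine ⟨fun heq => ?_, fun ⟨hxx', hyy'⟩ => by rw [hxx', hyy']⟩
  obtain hlt | rfl | hgt := lt_trichotomy x x'
  · exact absurd heq (blockLabel_lt_blockLabel hx hlt hy.2 hy'.1).ne
  · exact ⟨rfl, Nat.add_left_cancel heq⟩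
  · exact absurd heq (blockLabel_lt_blockLabel hx' hgt hy'.2 hy.1).ne'

/-- The product `D ⊗ₕ Γ` of a digraph `D`, with endpoint map `ends`, and a family of digraphs on a
common vertex set, with endpoint maps `ends' e` indexed by the edges `e` of `D`: the edges of
`ends' e` are copied over the edge `e`. -/
def productEnds (ends : E → V × V) (ends' : E → E' → V' × V') : E × E' → (V × V') × (V × V') :=
  fun p => (((ends p.1).1, (ends' p.1 p.2).1), ((ends p.1).2, (ends' p.1 p.2).2))

theorem IsEdgeMagic.product [Nonempty E] (h : IsEdgeMagic ends fv fe k) {ends' : E → E' → V' × V'}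
    {gv : V' → ℕ} {ge : E → E' → ℕ} {l : ℕ} (h' : ∀ e, IsSuperEdgeMagic (ends' e) gv (ge e) l)
    (hcard : Fintype.card E' = Fintype.card V') :
    IsEdgeMagic (productEnds ends ends')
      (fun p => blockLabel (Fintype.card V') (fv p.1) (gv p.2))
      (fun p => blockLabel (Fintype.card V') (fe p.1) (ge p.1 p.2 - Fintype.card V'))
      (Fintype.card V' * (k - 3) + (l - Fintype.card V')) := by
  set n := Fintype.card V'
  have hgv : ∀ x, gv x ∈ Set.Icc 1 n := (h' (Classical.arbitrary E)).vertex_mem_Icc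
  have hge : ∀ e w, ge e w - n ∈ Set.Icc 1 n := fun e w => by
    have := (h' e).edge_sub_card_mem_Icc w
    rwa [hcard] at this
  have hsize : Fintype.card (V × V') + Fintype.card (E × E') =
      n * (Fintype.card V + Fintype.card E) := by
    rw [Fintype.card_prod, Fintype.card_prod, hcard]
    ring
  have hfv := h.vertex_mem_Icc
  have hfe := h.edge_mem_Icc
  refine .of_mem_Icc ?_ ?_ ?_ ?_ ?_ ?_
  · rintro ⟨a, x⟩ ⟨b, y⟩ heq
    obtain ⟨hab, hxy⟩ := (blockLabel_inj (hfv a).1 (hfv b).1 (hgv x) (hgv y)).1 heq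
    exact Prod.ext (h.vertex_injective hab)
      ((h' (Classical.arbitrary E)).1.vertex_injective hxy)
  · rintro ⟨e, w⟩ ⟨f, z⟩ heq
    obtain ⟨hef, hwz⟩ := (blockLabel_inj (hfe e).1 (hfe f).1 (hge e w) (hge f z)).1 heq
    obtain rfl := h.edge_injective hef
    exact Prod.ext rfl ((h' e).edge_sub_card_injective hwz)
  · rintro ⟨a, x⟩ ⟨e, w⟩ heq
    exact h.vertex_ne_edge a e ((blockLabel_inj (hfv a).1 (hfe e).1 (hgv x) (hge e w)).1 heq).1
  · exact fun ⟨a, x⟩ => hsize ▸ blockLabel_mem_Icc (hfv a) (hgv x)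
  · exact fun ⟨e, w⟩ => hsize ▸ blockLabel_mem_Icc (hfe e) (hge e w)
  · rintro ⟨e, w⟩
    rw [h.valence_sub_three e, (h' e).valence_sub_card w]
    simp only [productEnds, blockLabel]
    ring

end EdgeMagic

section Cycle

lemma val_finRotate {m : ℕ} (i : Fin m) : (finRotate m i : ℕ) = (i + 1) % m := by
  have := i.neZero
  rw [finRotate_apply, Fin.val_add, Fin.val_one', Nat.add_mod_mod]

lemma val_finRotate_eq_ite {m : ℕ} (i : Fin m) :
    (finRotate m i : ℕ) = if (i : ℕ) + 1 = m then 0 else (i : ℕ) + 1 := by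
  rw [val_finRotate]
  split_ifs with hlast
  · rw [hlast, Nat.mod_self]
  · exact Nat.mod_eq_of_lt (by omega)

lemma cycleEnds_eq (m : ℕ) (i : Fin m) : cycleEnds m i = (i, finRotate m i) :=
  Prod.ext rfl (Fin.ext (val_finRotate i).symm)

/-- Vertex labels of the standard super edge-magic labeling of an odd cycle: the even-indexed
vertices receive `1, …, (n + 1) / 2` in order and the odd-indexed ones the remaining labels. -/
def cycleVertexLabel (n : ℕ) (i : Fin n) : ℕ :=
  if (i : ℕ) % 2 = 0 then i / 2 + 1 else (i + n) / 2 + 1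

/-- Edge labels of the standard super edge-magic labeling of an odd cycle: decreasing from
`2 * n - 1` along the path `0, …, n - 1`, with `2 * n` on the closing edge. -/
def cycleEdgeLabel (n : ℕ) (i : Fin n) : ℕ :=
  if (i : ℕ) + 1 = n then 2 * n else 2 * n - 1 - i

lemma cycleEnds_labels_sum {n : ℕ} (hn : Odd n) (i : Fin n) :
    cycleVertexLabel n (cycleEnds n i).1 + cycleEdgeLabel n i +
      cycleVertexLabel n (cycleEnds n i).2 = n + 3 * (n / 2) + 3 := by
  obtain ⟨h, rfl⟩ := hn
  by_cases hlast : (i : ℕ) + 1 = 2 * h + 1 <;>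
    simp only [cycleEnds_eq, cycleVertexLabel, cycleEdgeLabel, val_finRotate_eq_ite, hlast,
      if_true, if_false] <;>
    split_ifs <;> omega

theorem isSuperEdgeMagic_cycleEnds {n : ℕ} (hn : Odd n) :
    IsSuperEdgeMagic (cycleEnds n) (cycleVertexLabel n) (cycleEdgeLabel n)
      (n + 3 * (n / 2) + 3) := by
  have hhalf := Nat.two_mul_div_two_add_one_of_odd hn
  refine .of_mem_Icc (fun i j hij => ?_) (fun i j hij => ?_) (fun i => ?_) (fun i => ?_)
    (cycleEnds_labels_sum hn)
  · simp only [cycleVertexLabel] at hij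
    split_ifs at hij <;> omega
  · simp only [cycleEdgeLabel] at hij
    split_ifs at hij <;> omega
  · simp only [cycleVertexLabel, Set.mem_Icc, Fintype.card_fin]
    split_ifs <;> omega
  · simp only [cycleEdgeLabel, Set.mem_Icc, Fintype.card_fin]
    split_ifs <;> omega

lemma isEdgeMagic_cycleEnds_odd_even {n : ℕ} (hn : Odd n) :
    IsEdgeMagic (cycleEnds n) (fun i => 2 * cycleVertexLabel n i - 1)
      (fun i => 2 * (cycleEdgeLabel n i - n)) (3 * n + 1) := by
  have hvalence : 2 * (n + 3 * (n / 2) + 3) - 2 * n - 2 = 3 * n + 1 := by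
    have := Nat.two_mul_div_two_add_one_of_odd hn
    omega
  simpa only [Fintype.card_fin, hvalence] using
    (isSuperEdgeMagic_cycleEnds hn).isEdgeMagic_odd_even le_rfl (Nat.le_succ _)

lemma finRotate_finProdFinEquiv {n q : ℕ} (c : Fin n) (a : Fin q) :
    finRotate (n * q) (finProdFinEquiv (c, a)) =
      finProdFinEquiv (if (a : ℕ) + 1 = q then finRotate n c else c, finRotate q a) := by
  refine Fin.ext ?_
  rw [val_finRotate]
  simp only [finProdFinEquiv_apply_val, val_finRotate]
  split_ifs with hlast
  · rw [hlast, Nat.mod_self, zero_add, val_finRotate, add_right_comm, hlast, add_comm,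
      ← Nat.mul_add_one, mul_comm n, Nat.mul_mod_mul_left]
  · have hlt : (a : ℕ) + q * c + 1 < n * q := by
      have := Nat.mul_le_mul_left q (Nat.succ_le_of_lt c.isLt)
      rw [Nat.mul_succ, mul_comm q n] at this
      omega
    rw [Nat.mod_eq_of_lt hlt, Nat.mod_eq_of_lt (by omega)]
    ring

/-- The cycle `C_n`, oriented forward over an even-indexed edge `a` of `C_q` and backward over an
odd-indexed one. -/
def alternatingCycleEnds (q n : ℕ) (a : Fin q) : Fin n → Fin n × Fin n :=
  if (a : ℕ) % 2 = 0 then cycleEnds n else fun c => (cycleEnds n c).swap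

lemma isSuperEdgeMagic_alternatingCycleEnds {q n : ℕ} (hn : Odd n) (a : Fin q) :
    IsSuperEdgeMagic (alternatingCycleEnds q n a) (cycleVertexLabel n) (cycleEdgeLabel n)
      (n + 3 * (n / 2) + 3) := by
  unfold alternatingCycleEnds
  split_ifs
  · exact isSuperEdgeMagic_cycleEnds hn
  · exact (isSuperEdgeMagic_cycleEnds hn).swap

/-- The edges of `C_{nq}` as those of the product of `C_q` with the cycles
`alternatingCycleEnds q n a`: the edge `a + q * c` is the copy of the edge `c` over the edge `a`. -/
def cycleEdgeEquiv (q n : ℕ) : Fin (n * q) ≃ Fin q × Fin n :=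
  finProdFinEquiv.symm.trans (Equiv.prodComm _ _)

/-- The vertices of `C_{nq}` as those of the product of `C_q` with the cycles
`alternatingCycleEnds q n a`: each edge starts at the tail or at the head of an edge of `C_n`
according to the parity of `a`. -/
def cycleVertexEquiv (q n : ℕ) : Fin (n * q) ≃ Fin q × Fin n :=
  (cycleEdgeEquiv q n).trans <| Equiv.prodShear (Equiv.refl _) fun a =>
    if (a : ℕ) % 2 = 0 then Equiv.refl _ else finRotate n

lemma cycleEdgeEquiv_finProdFinEquiv {q n : ℕ} (c : Fin n) (a : Fin q) :
    cycleEdgeEquiv q n (finProdFinEquiv (c, a)) = (a, c) := by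
  simp only [cycleEdgeEquiv, Equiv.trans_apply, Equiv.symm_apply_apply, Equiv.prodComm_apply,
    Prod.swap_prod_mk]

lemma cycleVertexEquiv_finProdFinEquiv {q n : ℕ} (c : Fin n) (a : Fin q) :
    cycleVertexEquiv q n (finProdFinEquiv (c, a)) =
      (a, if (a : ℕ) % 2 = 0 then c else finRotate n c) := by
  simp only [cycleVertexEquiv, Equiv.trans_apply, cycleEdgeEquiv_finProdFinEquiv,
    Equiv.prodShear_apply]
  split_ifs <;> rfl

lemma productEnds_cycleEdgeEquiv {q n : ℕ} (hq : Odd q) (i : Fin (n * q)) :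
    productEnds (cycleEnds q) (alternatingCycleEnds q n) (cycleEdgeEquiv q n i) =
      Prod.map (cycleVertexEquiv q n) (cycleVertexEquiv q n) (cycleEnds (n * q) i) := by
  obtain ⟨⟨c, a⟩, rfl⟩ := finProdFinEquiv.surjective i
  have hnext := val_finRotate_eq_ite a
  simp only [productEnds, alternatingCycleEnds, cycleEnds_eq, finRotate_finProdFinEquiv,
    Prod.map_apply, cycleEdgeEquiv_finProdFinEquiv, cycleVertexEquiv_finProdFinEquiv]
  have : q % 2 = 1 := Nat.odd_iff.1 hq
  by_cases hlast : (a : ℕ) + 1 = q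
  · rw [if_pos hlast] at hnext
    have hparity : (a : ℕ) % 2 = 0 := by omega
    simp only [hlast, hnext, hparity, if_true, Nat.zero_mod, cycleEnds_eq]
  · rw [if_neg hlast] at hnext
    obtain hparity | hparity := Nat.mod_two_eq_zero_or_one a
    · have hparity' : ((a : ℕ) + 1) % 2 = 1 := by omega
      simp only [hlast, hnext, hparity, hparity', if_true, if_false, one_ne_zero, cycleEnds_eq]
    · have hparity' : ((a : ℕ) + 1) % 2 = 0 := by omega
      simp only [hlast, hnext, hparity, hparity', if_true, if_false, one_ne_zero, Prod.swap_prod_mk]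

theorem exists_isEdgeMagic_cycleEnds_of_dvd {m n : ℕ} (hm : Odd m) (hn : n ∣ m) :
    ∃ fv fe, IsEdgeMagic (cycleEnds m) fv fe (3 * m + 1 - n / 2) := by
  obtain ⟨q, rfl⟩ := hn
  obtain ⟨hn, hq⟩ := Nat.odd_mul.1 hm
  have : NeZero q := ⟨hq.pos.ne'⟩
  have hcycle := ((isEdgeMagic_cycleEnds_odd_even hq).product
    (isSuperEdgeMagic_alternatingCycleEnds hn) rfl).comp_equiv _ _ (productEnds_cycleEdgeEquiv hq)
  have hvalence : Fintype.card (Fin n) * (3 * q + 1 - 3) +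
      (n + 3 * (n / 2) + 3 - Fintype.card (Fin n)) = 3 * (n * q) + 1 - n / 2 := by
    have hblocks : n * (3 * q - 2) = 3 * (n * q) - 2 * n := by rw [Nat.mul_sub]; ring_nf
    have := Nat.le_mul_of_pos_right n hq.pos
    have := Nat.two_mul_div_two_add_one_of_odd hn
    rw [Fintype.card_fin, show 3 * q + 1 - 3 = 3 * q - 2 by omega, hblocks]
    omega
  exact ⟨_, _, hvalence ▸ hcycle⟩

lemma injOn_valence_divisors {m : ℕ} (hm : Odd m) :
    Set.InjOn (fun n => 3 * m + 1 - n / 2) m.divisors := by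
  intro n hn n' hn' heq
  have hdvd := Nat.dvd_of_mem_divisors hn
  have hdvd' := Nat.dvd_of_mem_divisors hn'
  have := Nat.le_of_dvd hm.pos hdvd
  have := Nat.le_of_dvd hm.pos hdvd'
  have := Nat.two_mul_div_two_add_one_of_odd (hm.of_dvd_nat hdvd)
  have := Nat.two_mul_div_two_add_one_of_odd (hm.of_dvd_nat hdvd')
  dsimp only at heq
  omega

end Cycle

lemma one_add_sum_le_prod_one_add {ι R : Type*} [CommSemiring R] [PartialOrder R]
    [IsOrderedRing R] {s : Finset ι} {f : ι → R} (hf : ∀ i ∈ s, 0 ≤ f i) :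
    1 + ∑ i ∈ s, f i ≤ ∏ i ∈ s, (1 + f i) := by
  classical
  induction s using Finset.induction_on with
  | empty => simp
  | insert a s ha ih =>
    obtain ⟨hfa, hfs⟩ := (Finset.forall_mem_insert _ _ _).1 hf
    rw [Finset.sum_insert ha, Finset.prod_insert ha]
    calc 1 + (f a + ∑ i ∈ s, f i)
        ≤ 1 + (f a + ∑ i ∈ s, f i) + f a * ∑ i ∈ s, f i :=
          le_add_of_nonneg_right (mul_nonneg hfa (Finset.sum_nonneg hfs))
      _ = (1 + f a) * (1 + ∑ i ∈ s, f i) := by ring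
      _ ≤ (1 + f a) * ∏ i ∈ s, (1 + f i) :=
          mul_le_mul_of_nonneg_left (ih hfs) (add_nonneg zero_le_one hfa)

lemma one_add_factorization_sum_le_card_divisors {n : ℕ} (hn : n ≠ 0) :
    (1 + n.factorization.sum fun _ e => e) ≤ n.divisors.card := by
  rw [Nat.card_divisors hn]
  simp only [add_comm _ 1]
  exact one_add_sum_le_prod_one_add fun p _ => Nat.zero_le (n.factorization p)

/-- for odd m ≥ 3 with Ω(m) = α₁+⋯+α_k prime factors counted
with multiplicity, the cycle C_m admits at least 1 + Ω(m) mutually different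
edge-magic valences. -/
theorem oddCycle_valences_lowerBound (m : ℕ) (hm : 3 ≤ m) (hodd : Odd m) :
    ∃ S : Finset ℕ,
      (1 + m.factorization.sum fun _ e => e) ≤ S.card ∧
      ∀ k ∈ S, ∃ fv fe, IsEdgeMagic (cycleEnds m) fv fe k := by
  refine ⟨m.divisors.image fun n => 3 * m + 1 - n / 2, ?_, fun k hk => ?_⟩
  · rw [Finset.card_image_of_injOn (injOn_valence_divisors hodd)]
    exact one_add_factorization_sum_le_card_divisors hodd.pos.ne'
  · obtain ⟨n, hn, rfl⟩ := Finset.mem_image.1 hk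
    exact exists_isEdgeMagic_cycleEnds_of_dvd hodd (Nat.dvd_of_mem_divisors hn)
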